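/- Let φ_{μ,σ}(x) = (1/(σ√(2π))) · exp(−(x − μ)²/(2σ²)) denote the normal density with mean μ and standard deviation σ, and let Φ denote the standard normal cumulative distribution function. Then for all μ ∈ ℝ, σ > 0, and a ≥ 0, ∫_{−a}^{a} x² φ_{μ,σ}(x) dx = −(μσ/√(2π)) · (exp(−(a−μ)²/(2σ²)) − exp(−(a+μ)²/(2σ²))) − (aσ/√(2π)) · (exp(−(a−μ)²/(2σ²)) + exp(−(a+μ)²/(2σ²))) + (σ² + μ²) · (Φ((a−μ)/σ) − Φ((−a−μ)/σ)). -/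

import Mathlib

/-- The density of the normal distribution with mean `μ` and standard deviation `σ`. -/
noncomputable def normalPDF (μ σ x : ℝ) : ℝ :=
  (1 / (σ * Real.sqrt (2 * Real.pi))) * Real.exp (-(x - μ)^2 / (2 * σ^2))

/-- The cumulative distribution function of the standard normal distribution. -/
noncomputable def stdNormalCDF (t : ℝ) : ℝ :=
  ∫ s in Set.Iic t, (1 / Real.sqrt (2 * Real.pi)) * Real.exp (-s^2 / 2)

/-!
The density satisfies `φ' = -(x - μ) / σ² * φ`, so differentiating `-σ² (x + μ) φ` gives
`(x² - (σ² + μ²)) φ`. The missing `(σ² + μ²) φ` is the derivative of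
`(σ² + μ²) Φ((x - μ) / σ)`, and the sum of the two functions is an antiderivative of `x² φ`.
-/

open MeasureTheory ProbabilityTheory Set

lemma hasDerivAt_setIntegral_Iic {E : Type*} [NormedAddCommGroup E] [NormedSpace ℝ E]
    [CompleteSpace E] {f : ℝ → E} (hf : Integrable f) {t : ℝ} (ht : ContinuousAt f t) :
    HasDerivAt (fun u ↦ ∫ x in Iic u, f x) (f t) t := by
  have integral_Iic_eq :
      (fun u ↦ ∫ x in Iic u, f x) = fun u ↦ (∫ x in Iic t, f x) + ∫ x in t..u, f x := by
    ext u
    rw [← intervalIntegral.integral_Iic_sub_Iic hf.integrableOn hf.integrableOn,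
      add_sub_cancel]
  rw [integral_Iic_eq]
  exact (intervalIntegral.integral_hasDerivAt_right hf.intervalIntegrable
    hf.aestronglyMeasurable.stronglyMeasurableAtFilter ht).const_add _

lemma continuous_normalPDF (μ σ : ℝ) : Continuous (normalPDF μ σ) := by
  unfold normalPDF
  fun_prop

lemma hasDerivAt_normalPDF (μ σ x : ℝ) :
    HasDerivAt (normalPDF μ σ) (-((x - μ) / σ ^ 2) * normalPDF μ σ x) x := by
  have exponent_deriv :
      HasDerivAt (fun y ↦ -(y - μ) ^ 2 / (2 * σ ^ 2)) (-((x - μ) / σ ^ 2)) x := by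
    refine ((((hasDerivAt_id x).sub_const μ).pow 2).neg.div_const (2 * σ ^ 2)).congr_deriv ?_
    simp only [id]
    ring
  refine (exponent_deriv.exp.const_mul (1 / (σ * √(2 * Real.pi)))).congr_deriv ?_
  unfold normalPDF
  ring

lemma normalPDF_eq_gaussianPDFReal (μ : ℝ) (σ : NNReal) :
    normalPDF μ σ = gaussianPDFReal μ (σ ^ 2) := by
  ext x
  have sqrt_variance : √(2 * Real.pi * σ ^ 2) = σ * √(2 * Real.pi) := by
    rw [Real.sqrt_mul (by positivity), Real.sqrt_sq σ.coe_nonneg, mul_comm]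
  simp only [normalPDF, gaussianPDFReal, NNReal.coe_pow, sqrt_variance, one_div]

lemma integrable_normalPDF {σ : ℝ} (hσ : 0 ≤ σ) (μ : ℝ) : Integrable (normalPDF μ σ) := by
  lift σ to NNReal using hσ
  rw [normalPDF_eq_gaussianPDFReal]
  exact integrable_gaussianPDFReal μ (σ ^ 2)

lemma normalPDF_zero_one_sub_div {σ : ℝ} (hσ : σ ≠ 0) (μ x : ℝ) :
    normalPDF 0 1 ((x - μ) / σ) = σ * normalPDF μ σ x := by
  have exponent_eq : -((x - μ) / σ - 0) ^ 2 / (2 * 1 ^ 2) = -(x - μ) ^ 2 / (2 * σ ^ 2) := by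
    field_simp
    ring
  rw [normalPDF, normalPDF, exponent_eq]
  field_simp

lemma stdNormalCDF_eq_setIntegral_normalPDF (t : ℝ) :
    stdNormalCDF t = ∫ x in Iic t, normalPDF 0 1 x := by
  simp only [stdNormalCDF, normalPDF, sub_zero, one_pow, one_mul, mul_one]

lemma hasDerivAt_stdNormalCDF (t : ℝ) : HasDerivAt stdNormalCDF (normalPDF 0 1 t) t := by
  rw [funext stdNormalCDF_eq_setIntegral_normalPDF]
  exact hasDerivAt_setIntegral_Iic (integrable_normalPDF zero_le_one 0)
    (continuous_normalPDF 0 1).continuousAt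

lemma hasDerivAt_stdNormalCDF_sub_div {σ : ℝ} (hσ : σ ≠ 0) (μ x : ℝ) :
    HasDerivAt (fun y ↦ stdNormalCDF ((y - μ) / σ)) (normalPDF μ σ x) x := by
  refine ((hasDerivAt_stdNormalCDF ((x - μ) / σ)).comp x
    (((hasDerivAt_id x).sub_const μ).div_const σ)).congr_deriv ?_
  rw [normalPDF_zero_one_sub_div hσ]
  field_simp

lemma hasDerivAt_sq_mul_normalPDF_antideriv {σ : ℝ} (hσ : σ ≠ 0) (μ x : ℝ) :
    HasDerivAt
      (fun y ↦ (σ ^ 2 + μ ^ 2) * stdNormalCDF ((y - μ) / σ) - σ ^ 2 * ((y + μ) * normalPDF μ σ y))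
      (x ^ 2 * normalPDF μ σ x) x := by
  have boundary_deriv : HasDerivAt (fun y ↦ (y + μ) * normalPDF μ σ y)
      (normalPDF μ σ x + (x + μ) * (-((x - μ) / σ ^ 2) * normalPDF μ σ x)) x := by
    simpa only [one_mul, id] using!
      ((hasDerivAt_id x).add_const μ).mul (hasDerivAt_normalPDF μ σ x)
  refine (((hasDerivAt_stdNormalCDF_sub_div hσ μ x).const_mul (σ ^ 2 + μ ^ 2)).sub
    (boundary_deriv.const_mul (σ ^ 2))).congr_deriv ?_
  field_simp
  ring

theorem truncated_second_moment_normal_general {σ : ℝ} (hσ : σ ≠ 0) (μ a b : ℝ) :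
    ∫ x in a..b, x ^ 2 * normalPDF μ σ x
      = (σ ^ 2 + μ ^ 2) * (stdNormalCDF ((b - μ) / σ) - stdNormalCDF ((a - μ) / σ))
        - σ ^ 2 * ((b + μ) * normalPDF μ σ b - (a + μ) * normalPDF μ σ a) := by
  have integrand_continuous : Continuous fun x ↦ x ^ 2 * normalPDF μ σ x :=
    (continuous_pow 2).mul (continuous_normalPDF μ σ)
  rw [intervalIntegral.integral_eq_sub_of_hasDerivAt
    (fun x _ ↦ hasDerivAt_sq_mul_normalPDF_antideriv hσ μ x)
    (integrand_continuous.intervalIntegrable a b)]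
  ring

theorem truncated_second_moment_normal (μ σ a : ℝ) (hσ : 0 < σ) (ha : 0 ≤ a) :
    ∫ x in (-a)..a, x^2 * normalPDF μ σ x
      = -(μ * σ / Real.sqrt (2 * Real.pi))
          * (Real.exp (-(a - μ)^2 / (2 * σ^2)) - Real.exp (-(a + μ)^2 / (2 * σ^2)))
        - (a * σ / Real.sqrt (2 * Real.pi))
          * (Real.exp (-(a - μ)^2 / (2 * σ^2)) + Real.exp (-(a + μ)^2 / (2 * σ^2)))
        + (σ^2 + μ^2) * (stdNormalCDF ((a - μ) / σ) - stdNormalCDF ((-a - μ) / σ)) := by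
  rw [truncated_second_moment_normal_general hσ.ne', normalPDF, normalPDF,
    show (-a - μ) ^ 2 = (a + μ) ^ 2 by ring]
  field_simp
  ring
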